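/- arXiv:2008.08724 — 3 statements merged into one kernel-verified Lean document; each statement's English description precedes it below -/
import Mathlib

section
/- On the real rays beyond the critical breaking points, H is purely imaginary with the explicit values: for every real s > 2, H(s) = i·(2·Real.arccos(2/s) − Real.sqrt(s² − 4)), and for every real s < −2, H(s) = i·(2·Real.arccos(2/s) + Real.sqrt(s² − 4)). -/
/-!
For real `s` with `|s| > 2` put `x = 2 / s ∈ (-1, 1)`. The radicand `x² - 1` is negative, so its
principal square root is `i √(1 - x²) = i sin (arccos x)`. Hence the argument of the logarithm is
`cos (arccos x) + i sin (arccos x) = exp (i arccos x)`, and since `arccos x ∈ [0, π]` its principal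
logarithm is `i arccos x`. The remaining term is `s √(1 - 4 / s²) = ± √(s² - 4)`, with the sign
of `s`.
-/

open Complex

/-- The saddle-point value `H(s) = h(2/s; s)` of the genus-zero modified external field. -/
noncomputable def Hfun (s : ℂ) : ℂ :=
  2 * Complex.log (2 / s + (4 / s ^ 2 - 1) ^ ((1 : ℂ) / 2))
    - s * (4 / s ^ 2 - 1) ^ ((1 : ℂ) / 2)

/-- The principal square root of a nonpositive real lies on the upper imaginary axis. -/
lemma cpow_half_of_nonpos {y : ℝ} (hy : y ≤ 0) :
    (y : ℂ) ^ ((1 : ℂ) / 2) = Complex.I * (Real.sqrt (-y) : ℂ) := by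
  have hexp : Complex.exp (Real.pi * Complex.I * (1 / 2)) = Complex.I := by
    rw [show (Real.pi : ℂ) * Complex.I * (1 / 2) = Real.pi / 2 * Complex.I by ring,
      Complex.exp_pi_div_two_mul_I]
  rw [Complex.ofReal_cpow_of_nonpos hy, hexp, Real.sqrt_eq_rpow,
    Complex.ofReal_cpow (by linarith)]
  push_cast
  ring

lemma log_add_I_mul_sqrt {x : ℝ} (h₁ : -1 ≤ x) (h₂ : x ≤ 1) :
    Complex.log (x + Complex.I * (Real.sqrt (1 - x ^ 2) : ℂ))
      = Complex.I * (Real.arccos x : ℂ) := by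
  have hexp : (x : ℂ) + Complex.I * (Real.sqrt (1 - x ^ 2) : ℂ)
      = Complex.exp (Real.arccos x * Complex.I) := by
    rw [Complex.exp_mul_I, ← Complex.ofReal_cos, ← Complex.ofReal_sin, Real.cos_arccos h₁ h₂,
      Real.sin_arccos]
    ring
  have him : ((Real.arccos x : ℂ) * Complex.I).im = Real.arccos x := by simp
  rw [hexp, Complex.log_exp, mul_comm]
  · rw [him]
    linarith [Real.arccos_nonneg x, Real.pi_pos]
  · rw [him]
    exact Real.arccos_le_pi x

/-- The common form of both rays, before the sign of `s` is used to simplify the second term. -/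
lemma Hfun_ofReal {s : ℝ} (h₁ : -1 ≤ 2 / s) (h₂ : 2 / s ≤ 1) :
    Hfun (s : ℂ) = Complex.I *
      ((2 * Real.arccos (2 / s) - s * Real.sqrt (1 - (2 / s) ^ 2) : ℝ) : ℂ) := by
  have hroot : ((4 : ℂ) / (s : ℂ) ^ 2 - 1) ^ ((1 : ℂ) / 2)
      = Complex.I * (Real.sqrt (1 - (2 / s) ^ 2) : ℂ) := by
    have hcast : (4 : ℂ) / (s : ℂ) ^ 2 - 1 = (((2 / s) ^ 2 - 1 : ℝ) : ℂ) := by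
      push_cast
      ring
    rw [hcast, cpow_half_of_nonpos (by nlinarith), neg_sub]
  have hlog := log_add_I_mul_sqrt h₁ h₂
  have hdiv : (2 : ℂ) / (s : ℂ) = ((2 / s : ℝ) : ℂ) := by push_cast; rfl
  rw [Hfun, hroot, hdiv, hlog]
  push_cast
  ring

lemma abs_mul_sqrt {s : ℝ} (hs : s ≠ 0) :
    |s| * Real.sqrt (1 - (2 / s) ^ 2) = Real.sqrt (s ^ 2 - 4) := by
  rw [← Real.sqrt_sq_eq_abs, ← Real.sqrt_mul (sq_nonneg s)]
  congr 1
  field_simp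
  ring

theorem H_on_real_breaking_rays :
    (∀ s : ℝ, 2 < s →
      Hfun (s : ℂ) = Complex.I * ((2 * Real.arccos (2 / s) - Real.sqrt (s ^ 2 - 4) : ℝ) : ℂ)) ∧
    (∀ s : ℝ, s < -2 →
      Hfun (s : ℂ) = Complex.I * ((2 * Real.arccos (2 / s) + Real.sqrt (s ^ 2 - 4) : ℝ) : ℂ)) := by
  constructor
  · intro s hs
    have hpos : 0 < s := by linarith
    have h₁ : -1 ≤ 2 / s := by rw [le_div_iff₀ hpos]; linarith
    have h₂ : 2 / s ≤ 1 := by rw [div_le_iff₀ hpos]; linarith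
    rw [Hfun_ofReal h₁ h₂, ← abs_mul_sqrt hpos.ne', abs_of_pos hpos]
  · intro s hs
    have hneg : s < 0 := by linarith
    have h₁ : -1 ≤ 2 / s := by rw [le_div_iff_of_neg hneg]; linarith
    have h₂ : 2 / s ≤ 1 := by rw [div_le_iff_of_neg hneg]; linarith
    rw [Hfun_ofReal h₁ h₂, ← abs_mul_sqrt hneg.ne, abs_of_neg hneg, neg_mul, sub_eq_add_neg]
end

section
/- (Breaking curves are smooth simple curves through regular breaking points.) Let s_b ∈ ℂ with Re s_b ≠ 0, Im s_b ≠ 0 and Re H(s_b) = 0. Then there exist ε > 0 and a continuously differentiable curve γ : (−ε, ε) → ℂ with γ(0) = s_b, γ'(t) ≠ 0 for all t ∈ (−ε, ε), γ injective on (−ε, ε), Re H(γ(t)) = 0 for all t ∈ (−ε, ε), and there is an open neighborhood U of s_b such that {s ∈ U : Re H(s) = 0} = γ''(−ε, ε) ∩ U (the zero level set of Re H near s_b is exactly the image of γ). -/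
/-!
Off the coordinate axes `4 / s ^ 2 - 1` is not real, so its principal square root `R(s)` is
holomorphic and nonzero there. The argument `A = 2 / s + R` of the logarithm satisfies
`A * (2 / s - R) = 1`, so a real `A` would force `2 / s = (A + 1 / A) / 2` to be real; hence `A`
avoids the branch cut. Thus `H` is holomorphic off the axes, and the terms of its derivative
collapse to `H' = -R`, which never vanishes.

By the inverse function theorem `H` is a local biholomorphism `e` at `s_b`. Since `Re H(s_b) = 0`,
the zero level set of `Re H` near `s_b` is the preimage of a segment of the imaginary axis, which
is parametrized by `γ(t) = e⁻¹(H(s_b) + i t)`, with `γ'(t) = -i / R(γ(t))`.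
-/

open Complex

/-- The principal square root of `4 / s ^ 2 - 1`. -/
noncomputable def Rfun (s : ℂ) : ℂ := (4 / s ^ 2 - 1) ^ ((1 : ℂ) / 2)

lemma radicand_im_ne_zero {s : ℂ} (hre : s.re ≠ 0) (him : s.im ≠ 0) :
    (4 / s ^ 2 - 1).im ≠ 0 := by
  have hs : s ≠ 0 := fun h => hre (by simp [h])
  have hn : normSq (s ^ 2) ≠ 0 := by simpa using hs
  have h2 : (s ^ 2).im ≠ 0 := by
    have h : (s ^ 2).im = 2 * (s.re * s.im) := by rw [pow_two, mul_im]; ring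
    rw [h]
    exact mul_ne_zero two_ne_zero (mul_ne_zero hre him)
  have h4 : (4 / s ^ 2 - 1).im = -(4 * (s ^ 2).im / normSq (s ^ 2)) := by
    rw [sub_im, div_im]; simp
  rw [h4]
  exact neg_ne_zero.mpr (div_ne_zero (mul_ne_zero four_ne_zero h2) hn)

lemma Rfun_sq (s : ℂ) : Rfun s ^ 2 = 4 / s ^ 2 - 1 := by
  simp [Rfun]

lemma Rfun_ne_zero {s : ℂ} (hre : s.re ≠ 0) (him : s.im ≠ 0) : Rfun s ≠ 0 := by
  intro h
  apply radicand_im_ne_zero hre him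
  rw [← Rfun_sq, h]
  simp

/-- The argument of the logarithm is never real off the coordinate axes: its inverse is
`2 / s - R`, so otherwise `4 / s` would be real. -/
lemma logArg_im_ne_zero {s : ℂ} (hre : s.re ≠ 0) (him : s.im ≠ 0) :
    (2 / s + Rfun s).im ≠ 0 := by
  intro h
  have hs : s ≠ 0 := fun h => hre (by simp [h])
  have hmul : (2 / s + Rfun s) * (2 / s - Rfun s) = 1 := by
    have := Rfun_sq s
    linear_combination -this
  have hinv : 2 / s - Rfun s = (2 / s + Rfun s)⁻¹ := eq_inv_of_mul_eq_one_right hmul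
  have h' : (2 / s - Rfun s).im = 0 := by rw [hinv, inv_im, h]; simp
  have h2 : (2 / s).im = 0 := by
    rw [add_im] at h
    rw [sub_im] at h'
    linarith
  have h3 : (2 / s).im = -(2 * s.im / normSq s) := by rw [div_im]; simp
  rw [h3] at h2
  exact (neg_ne_zero.mpr (div_ne_zero (mul_ne_zero two_ne_zero him) (by simpa using hs))) h2

lemma Rfun_hasStrictDerivAt {s : ℂ} (hre : s.re ≠ 0) (him : s.im ≠ 0) :
    HasStrictDerivAt Rfun (-4 / (s ^ 3 * Rfun s)) s := by
  have hs : s ≠ 0 := fun h => hre (by simp [h])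
  have hR := Rfun_ne_zero hre him
  have hw : 4 / s ^ 2 - 1 ∈ slitPlane := Or.inr (radicand_im_ne_zero hre him)
  have hw0 := slitPlane_ne_zero hw
  have h1 : HasStrictDerivAt (fun s : ℂ => 4 / s ^ 2 - 1) (-8 / s ^ 3) s := by
    have := ((hasStrictDerivAt_const s (4 : ℂ)).fun_div (hasStrictDerivAt_pow 2 s)
      (pow_ne_zero 2 hs)).sub_const 1
    refine HasStrictDerivAt.congr_deriv this ?_
    field_simp
    norm_num
    ring
  have h2 := h1.cpow_const (c := (1 : ℂ) / 2) hw
  unfold Rfun at hR ⊢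
  convert h2 using 1
  rw [Complex.cpow_sub _ _ hw0, Complex.cpow_one]
  have hsq := Rfun_sq s
  unfold Rfun at hsq
  rw [show (4 / s ^ 2 - 1 : ℂ) = ((4 / s ^ 2 - 1) ^ ((1 : ℂ) / 2)) ^ 2 from hsq.symm] at hw0
  generalize (4 / s ^ 2 - 1 : ℂ) ^ ((1 : ℂ) / 2) = r at *
  rw [← hsq]
  field_simp
  norm_num

lemma Hfun_hasStrictDerivAt {s : ℂ} (hre : s.re ≠ 0) (him : s.im ≠ 0) :
    HasStrictDerivAt Hfun (-Rfun s) s := by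
  have hs : s ≠ 0 := fun h => hre (by simp [h])
  have hR := Rfun_ne_zero hre him
  have hA : 2 / s + Rfun s ∈ slitPlane := Or.inr (logArg_im_ne_zero hre him)
  have hA0 := slitPlane_ne_zero hA
  have hdR := Rfun_hasStrictDerivAt hre him
  have h1 : HasStrictDerivAt (fun s : ℂ => 2 / s) (-2 / s ^ 2) s := by
    have := (hasStrictDerivAt_const s (2 : ℂ)).fun_div (hasStrictDerivAt_id s) hs
    refine HasStrictDerivAt.congr_deriv this ?_
    simp
  have h2 := (((h1.fun_add hdR).clog hA).const_mul 2).fun_sub ((hasStrictDerivAt_id s).fun_mul hdR)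
  refine HasStrictDerivAt.congr_deriv (f := Hfun) h2 ?_
  -- `A' = -2 A / (s ^ 2 R)`, so the logarithmic term cancels against `-s R'`.
  have h3 : -2 / s ^ 2 + -4 / (s ^ 3 * Rfun s)
      = (-2 / (s ^ 2 * Rfun s)) * (2 / s + Rfun s) := by
    field_simp
    ring
  rw [h3, mul_div_assoc, div_self hA0]
  simp only [id]
  field_simp
  ring

theorem breaking_curve_through_regular_point (s_b : ℂ)
    (hre : s_b.re ≠ 0) (him : s_b.im ≠ 0) (hH : (Hfun s_b).re = 0) :
    ∃ (ε : ℝ) (γ : ℝ → ℂ), 0 < ε ∧ γ 0 = s_b ∧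
      (∃ γ' : ℝ → ℂ, ContinuousOn γ' (Set.Ioo (-ε) ε) ∧
        ∀ t ∈ Set.Ioo (-ε) ε, HasDerivAt γ (γ' t) t ∧ γ' t ≠ 0) ∧
      Set.InjOn γ (Set.Ioo (-ε) ε) ∧
      (∀ t ∈ Set.Ioo (-ε) ε, (Hfun (γ t)).re = 0) ∧
      ∃ U : Set ℂ, IsOpen U ∧ s_b ∈ U ∧
        {s : ℂ | s ∈ U ∧ (Hfun s).re = 0} = γ '' Set.Ioo (-ε) ε ∩ U := by
  have hd := Hfun_hasStrictDerivAt hre him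
  have hR := neg_ne_zero.mpr (Rfun_ne_zero hre him)
  set V : Set ℂ := {s | s.re ≠ 0 ∧ s.im ≠ 0} with hV
  have hVo : IsOpen V :=
    (isOpen_ne_fun continuous_re continuous_const).inter
      (isOpen_ne_fun continuous_im continuous_const)
  -- The local inverse, restricted to stay off the coordinate axes.
  set e := ((hd.hasStrictFDerivAt_equiv hR).toOpenPartialHomeomorph Hfun).restrOpen V hVo with he
  have hcoe : ∀ s, e s = Hfun s := fun s => rfl
  have hsb : s_b ∈ e.source :=
    ⟨(hd.hasStrictFDerivAt_equiv hR).mem_toOpenPartialHomeomorph_source, hre, him⟩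
  have hsrcV : ∀ s ∈ e.source, s ∈ V := fun s hs => hs.2
  have htb : Hfun s_b ∈ e.target := e.map_source hsb
  obtain ⟨ε, hε, hball⟩ := Metric.isOpen_iff.1 e.open_target _ htb
  have hmem : ∀ t ∈ Set.Ioo (-ε) ε, Hfun s_b + t * I ∈ Metric.ball (Hfun s_b) ε := by
    intro t ht
    rw [mem_ball_iff_norm, add_sub_cancel_left, norm_mul, norm_I, mul_one, norm_real]
    exact abs_lt.2 ht
  have hHγ : ∀ t ∈ Set.Ioo (-ε) ε, Hfun (e.symm (Hfun s_b + t * I)) = Hfun s_b + t * I :=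
    fun t ht => e.right_inv (hball (hmem t ht))
  have hγd : ∀ t ∈ Set.Ioo (-ε) ε,
      HasDerivAt (fun t : ℝ => e.symm (Hfun s_b + t * I))
        ((-Rfun (e.symm (Hfun s_b + t * I)))⁻¹ * I) t := by
    intro t ht
    have htt := hball (hmem t ht)
    obtain ⟨h1, h2⟩ := hsrcV _ (e.map_target htt)
    have hs := e.hasDerivAt_symm htt (neg_ne_zero.mpr (Rfun_ne_zero h1 h2))
      (Hfun_hasStrictDerivAt h1 h2).hasDerivAt
    have hl : HasDerivAt (fun t : ℝ => Hfun s_b + t * I) I t := by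
      simpa using ((hasDerivAt_id t).ofReal_comp.mul_const I).const_add (Hfun s_b)
    exact hs.comp t hl
  refine ⟨ε, fun t => e.symm (Hfun s_b + t * I), hε, ?_, ⟨_, ?_, fun t ht => ⟨hγd t ht, ?_⟩⟩,
    ?_, ?_, e.source ∩ e ⁻¹' Metric.ball (Hfun s_b) ε,
    e.isOpen_inter_preimage Metric.isOpen_ball, ⟨hsb, Metric.mem_ball_self hε⟩, ?_⟩
  · simpa [hcoe] using e.left_inv hsb
  · intro t ht
    obtain ⟨h1, h2⟩ := hsrcV _ (e.map_target (hball (hmem t ht)))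
    have hc : ContinuousAt (fun t : ℝ => Rfun (e.symm (Hfun s_b + t * I))) t :=
      ContinuousAt.comp (f := fun t : ℝ => e.symm (Hfun s_b + t * I))
        (Rfun_hasStrictDerivAt h1 h2).hasDerivAt.continuousAt (hγd t ht).continuousAt
    exact ((hc.neg.inv₀ (neg_ne_zero.mpr (Rfun_ne_zero h1 h2))).mul
      continuousAt_const).continuousWithinAt
  · obtain ⟨h1, h2⟩ := hsrcV _ (e.map_target (hball (hmem t ht)))
    exact mul_ne_zero (inv_ne_zero (neg_ne_zero.mpr (Rfun_ne_zero h1 h2))) I_ne_zero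
  · intro t ht u hu htu
    have h := congrArg Hfun htu
    simp only [hHγ t ht, hHγ u hu] at h
    simpa using h
  · intro t ht
    simp [hHγ t ht, hH]
  · ext s
    constructor
    · rintro ⟨⟨hs, hsB⟩, h0⟩
      -- `H s` and `H s_b` are both purely imaginary, which gives the parameter.
      have hst : Hfun s = Hfun s_b + ((Hfun s).im - (Hfun s_b).im : ℝ) * I := by
        apply Complex.ext <;> simp [h0, hH]
      refine ⟨⟨(Hfun s).im - (Hfun s_b).im, ?_, ?_⟩, hs, hsB⟩
      · have hlt : ‖Hfun s - Hfun s_b‖ < ε := mem_ball_iff_norm.1 hsB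
        rw [← sub_im]
        exact abs_lt.1 ((abs_im_le_norm _).trans_lt hlt)
      · simp only [← hst]
        exact e.left_inv hs
    · rintro ⟨⟨t, ht, rfl⟩, hU⟩
      refine ⟨hU, ?_⟩
      simp [hHγ t ht, hH]
end

section
/- (Jump of h on the complementary arc γ_{c,0} = (−∞,−1].) For every real x < −1, the boundary values of h satisfy h₊(x) − h₋(x) = 4πi; precisely, the function ε ↦ h(x + i·ε) − h(x − i·ε) tends to 4·π·i as ε → 0⁺. -/
/-!
For non-real `z`, rotating both square roots by a quarter turn gives
`w(z) = v(z) := -(1 - z)^(1/2) * (-1 - z)^(1/2)`: the factors are both `I` above the real axis and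
both `-I` below it, so their product is `-1` either way (`wfun_eq_vfun`). The function `v` is
continuous across `(-∞, -1)` and negative there, and `z + v(z)` lies in the same open half plane
as `z`. Hence `log (z + w(z)) = log (-(z + v(z))) ± π I` with the sign of `Im z`, so `h` equals
`gfun s z ± 2 π I`, where `gfun s` is continuous at `x`. The `gfun` contributions cancel in the
limit, leaving `4 π I`.
-/

open Complex

/-- `w(z) = (z − 1)^(1/2) · (z + 1)^(1/2)`, the branch of `(z² − 1)^(1/2)`
analytic off `[−1, 1]` with `w(z)/z → 1` at infinity. -/
noncomputable def wfun (z : ℂ) : ℂ := (z - 1) ^ ((1 : ℂ) / 2) * (z + 1) ^ ((1 : ℂ) / 2)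

/-- The genus-zero modified external field `h(z; s) = 2 log(z + w(z)) − s·w(z)`. -/
noncomputable def hfun (s z : ℂ) : ℂ := 2 * Complex.log (z + wfun z) - s * wfun z

/-- The continuation of `w` across `(-∞, -1)`, from either half plane. -/
noncomputable def vfun (z : ℂ) : ℂ := -((1 - z) ^ ((1 : ℂ) / 2) * (-1 - z) ^ ((1 : ℂ) / 2))

/-- The part of `h` that is continuous across `(-∞, -1)`. -/
noncomputable def gfun (s z : ℂ) : ℂ := 2 * Complex.log (-(z + vfun z)) - s * vfun z

lemma log_eq_log_neg_add {y : ℂ} (hy : 0 < y.im) :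
    Complex.log y = Complex.log (-y) + Real.pi * I := by
  rw [Complex.log, Complex.log, Complex.arg_neg_eq_arg_sub_pi_of_im_pos hy, norm_neg]
  push_cast
  ring

lemma sqrt_eq_I_mul {y : ℂ} (hy : 0 < y.im) :
    y ^ ((1 : ℂ) / 2) = I * (-y) ^ ((1 : ℂ) / 2) := by
  have h0 : y ≠ 0 := by rintro rfl; simp at hy
  rw [Complex.cpow_def_of_ne_zero h0, Complex.cpow_def_of_ne_zero (neg_ne_zero.2 h0),
    log_eq_log_neg_add hy, add_mul, Complex.exp_add, mul_comm I]
  congr 1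
  rw [show (Real.pi : ℂ) * I * (1 / 2) = Real.pi / 2 * I by ring, Complex.exp_pi_div_two_mul_I]

lemma sqrt_re_pos {y : ℂ} (hy : y.im ≠ 0) : 0 < (y ^ ((1 : ℂ) / 2)).re := by
  have h0 : y ≠ 0 := by rintro rfl; simp at hy
  have h1 := Complex.neg_pi_lt_arg y
  have h2 : y.arg < Real.pi := Complex.arg_lt_pi_iff.2 (Or.inr hy)
  have h3 : Complex.log y * (1 / 2) = ((y.arg / 2 : ℝ) : ℂ) * I + ((Real.log ‖y‖ / 2 : ℝ) : ℂ) := by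
    rw [Complex.log]; push_cast; ring
  have h4 : (Complex.log y * (1 / 2)).im = y.arg / 2 := by rw [h3]; simp
  rw [Complex.cpow_def_of_ne_zero h0, Complex.exp_re, h4]
  exact mul_pos (Real.exp_pos _) (Real.cos_pos_of_mem_Ioo ⟨by linarith, by linarith⟩)

lemma two_mul_sqrt_re_mul_im (y : ℂ) :
    2 * (y ^ ((1 : ℂ) / 2)).re * (y ^ ((1 : ℂ) / 2)).im = y.im := by
  have h : (y ^ ((1 : ℂ) / 2)) ^ 2 = y := by
    simp
  have h' := congrArg Complex.im h
  rw [pow_two, Complex.mul_im] at h'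
  linarith

lemma wfun_eq_vfun {z : ℂ} (hz : z.im ≠ 0) : wfun z = vfun z := by
  have e1 : -(z - 1) = 1 - z := by ring
  have e2 : -(z + 1) = -1 - z := by ring
  have e3 : -(1 - z) = z - 1 := by ring
  have e4 : -(-1 - z) = z + 1 := by ring
  unfold wfun vfun
  rcases lt_or_gt_of_ne hz with h | h
  · rw [sqrt_eq_I_mul (y := 1 - z) (by simpa using h),
      sqrt_eq_I_mul (y := -1 - z) (by simpa using h), e3, e4]
    linear_combination (z - 1) ^ ((1 : ℂ) / 2) * (z + 1) ^ ((1 : ℂ) / 2) * I_mul_I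
  · rw [sqrt_eq_I_mul (y := z - 1) (by simpa using h),
      sqrt_eq_I_mul (y := z + 1) (by simpa using h), e1, e2]
    linear_combination (1 - z) ^ ((1 : ℂ) / 2) * (-1 - z) ^ ((1 : ℂ) / 2) * I_mul_I

/-- Both square roots in `v` lie in the right half plane, with imaginary parts of the sign opposite
to that of `z.im`; so `v z` is on the same side of the real axis as `z`. -/
lemma vfun_im_mul_pos {z : ℂ} (hz : z.im ≠ 0) : 0 < (vfun z).im * z.im := by
  have a1 := sqrt_re_pos (y := 1 - z) (by simpa using hz)
  have b1 := sqrt_re_pos (y := -1 - z) (by simpa using hz)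
  have a2 := two_mul_sqrt_re_mul_im (1 - z)
  have b2 := two_mul_sqrt_re_mul_im (-1 - z)
  unfold vfun
  rw [Complex.neg_im, Complex.mul_im]
  set a := (1 - z) ^ ((1 : ℂ) / 2)
  set b := (-1 - z) ^ ((1 : ℂ) / 2)
  have a3 : z.im = -(2 * a.re * a.im) := by rw [a2]; simp
  have b3 : z.im = -(2 * b.re * b.im) := by rw [b2]; simp
  have ha : a.im ≠ 0 := by intro h; rw [h] at a3; simp at a3; exact hz a3
  have hb : b.im ≠ 0 := by intro h; rw [h] at b3; simp at b3; exact hz b3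
  have key : -(a.re * b.im + a.im * b.re) * z.im
      = 2 * (a.re * b.re) * b.im ^ 2 + 2 * (a.re * b.re) * a.im ^ 2 := by
    linear_combination (-a.re * b.im) * b3 + (-a.im * b.re) * a3
  rw [key]
  positivity

lemma hfun_eq_of_im_pos (s : ℂ) {z : ℂ} (hz : 0 < z.im) :
    hfun s z = gfun s z + 2 * Real.pi * I := by
  have hv := pos_of_mul_pos_left (vfun_im_mul_pos hz.ne') hz.le
  unfold hfun gfun
  rw [wfun_eq_vfun hz.ne', log_eq_log_neg_add (y := z + vfun z) (by rw [add_im]; linarith)]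
  ring

lemma hfun_eq_of_im_neg (s : ℂ) {z : ℂ} (hz : z.im < 0) :
    hfun s z = gfun s z - 2 * Real.pi * I := by
  have hv : (vfun z).im < 0 := by nlinarith [vfun_im_mul_pos hz.ne]
  unfold hfun gfun
  rw [wfun_eq_vfun hz.ne,
    log_eq_log_neg_add (y := -(z + vfun z)) (by rw [neg_im, add_im]; linarith), neg_neg]
  ring

lemma continuousAt_vfun {x : ℝ} (hx : x < -1) : ContinuousAt vfun (x : ℂ) := by
  unfold vfun
  refine ((ContinuousAt.cpow (by fun_prop) continuousAt_const (Or.inl ?_)).mul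
    (ContinuousAt.cpow (by fun_prop) continuousAt_const (Or.inl ?_))).neg
  · simp; linarith
  · simp; linarith

lemma vfun_ofReal_re_neg {x : ℝ} (hx : x < -1) : (vfun x).re < 0 := by
  have e : vfun x = ((-((1 - x) ^ ((1 : ℝ) / 2) * (-1 - x) ^ ((1 : ℝ) / 2)) : ℝ) : ℂ) := by
    unfold vfun
    push_cast [Complex.ofReal_cpow (show 0 ≤ 1 - x by linarith),
      Complex.ofReal_cpow (show 0 ≤ -1 - x by linarith)]
    rfl
  rw [e, ofReal_re, neg_lt_zero]
  exact mul_pos (Real.rpow_pos_of_pos (by linarith) _) (Real.rpow_pos_of_pos (by linarith) _)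

lemma continuousAt_gfun (s : ℂ) {x : ℝ} (hx : x < -1) : ContinuousAt (gfun s) (x : ℂ) := by
  have hv := continuousAt_vfun hx
  have hn := vfun_ofReal_re_neg hx
  unfold gfun
  refine (continuousAt_const.mul (ContinuousAt.clog (continuousAt_id.add hv).neg
    (Or.inl ?_))).sub (continuousAt_const.mul hv)
  simp
  linarith

theorem hfun_jump_on_complementary_arc (s : ℂ) (x : ℝ) (hx : x < -1) :
    Filter.Tendsto
      (fun ε : ℝ => hfun s ((x : ℂ) + Complex.I * (ε : ℂ)) - hfun s ((x : ℂ) - Complex.I * (ε : ℂ)))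
      (nhdsWithin 0 (Set.Ioi (0 : ℝ)))
      (nhds (4 * (Real.pi : ℂ) * Complex.I)) := by
  have hg := continuousAt_gfun s hx
  have hp : Filter.Tendsto (fun ε : ℝ => (x : ℂ) + I * (ε : ℂ)) (nhds 0) (nhds (x : ℂ)) := by
    have : Continuous (fun ε : ℝ => (x : ℂ) + I * (ε : ℂ)) := by fun_prop
    simpa using this.tendsto 0
  have hm : Filter.Tendsto (fun ε : ℝ => (x : ℂ) - I * (ε : ℂ)) (nhds 0) (nhds (x : ℂ)) := by
    have : Continuous (fun ε : ℝ => (x : ℂ) - I * (ε : ℂ)) := by fun_prop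
    simpa using this.tendsto 0
  have hlim := (((hg.tendsto.comp hp).sub (hg.tendsto.comp hm)).add_const
    (4 * (Real.pi : ℂ) * I)).mono_left (nhdsWithin_le_nhds (s := Set.Ioi (0 : ℝ)))
  rw [sub_self, zero_add] at hlim
  refine hlim.congr' ?_
  filter_upwards [self_mem_nhdsWithin] with ε hε
  have hε' : 0 < ε := hε
  rw [hfun_eq_of_im_pos s (by simpa using hε'), hfun_eq_of_im_neg s (by simpa using hε')]
  simp only [Function.comp_apply]
  ring
end
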